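/- Let N ≥ M ≥ 2 and consider the team reward R(A) = min_{j} max_{i} r_{ij} over admissible allocations. Then the supremum of R over admissible homogeneous allocations equals 1/M, the supremum over all admissible allocations equals 1, and hence the heterogeneity gain is ΔR = (M − 1)/M. -/

import Mathlib

open Finset

/-- An N×M allocation matrix is admissible if all entries are nonnegative and
every agent's (row's) efforts sum to 1. -/
def Admissible {N M : ℕ} (A : Fin N → Fin M → ℝ) : Prop :=
  (∀ i j, 0 ≤ A i j) ∧ ∀ i, ∑ j, A i j = 1

/-- An allocation is homogeneous if all rows coincide. -/
def Homogeneous {N M : ℕ} (A : Fin N → Fin M → ℝ) : Prop :=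
  ∀ i i' : Fin N, A i = A i'

/-- The column of task `j`. -/
def col {N M : ℕ} (A : Fin N → Fin M → ℝ) (j : Fin M) : Fin N → ℝ :=
  fun i => A i j

theorem Admissible.le_one {N M : ℕ} {A : Fin N → Fin M → ℝ} (hA : Admissible A)
    (i : Fin N) (j : Fin M) : A i j ≤ 1 :=
  (single_le_sum (fun k _ => hA.1 i k) (mem_univ j)).trans_eq (hA.2 i)

theorem Admissible.reward_le_one {N M : ℕ} [NeZero N] [NeZero M] {A : Fin N → Fin M → ℝ}
    (hA : Admissible A) : (⨅ j, ⨆ i, A i j) ≤ 1 :=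
  (ciInf_le (Set.finite_range _).bddBelow 0).trans (ciSup_le fun i => hA.le_one i 0)

/-- Under a homogeneous allocation every task score is the common entry of its column. -/
theorem Homogeneous.iSup_eq {N M : ℕ} [NeZero N] {A : Fin N → Fin M → ℝ}
    (hA : Homogeneous A) (j : Fin M) : (⨆ i, A i j) = A 0 j := by
  simp [fun i => hA i 0]

theorem Homogeneous.reward_le {N M : ℕ} [NeZero N] [NeZero M] {A : Fin N → Fin M → ℝ}
    (hA : Homogeneous A) (hA' : Admissible A) : (⨅ j, ⨆ i, A i j) ≤ 1 / M := by
  have hM : (0 : ℝ) < M := Nat.cast_pos.2 (NeZero.pos M)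
  simp only [hA.iSup_eq]
  rw [le_div_iff₀ hM, ← hA'.2 0, mul_comm]
  simpa using card_nsmul_le_sum univ (A 0) (⨅ j, A 0 j)
    fun j _ => ciInf_le (Set.finite_range _).bddBelow j

theorem isGreatest_homogeneous_reward {N M : ℕ} [NeZero N] [NeZero M] :
    IsGreatest {r : ℝ | ∃ A : Fin N → Fin M → ℝ,
      Admissible A ∧ Homogeneous A ∧ (⨅ j, ⨆ i, A i j) = r} (1 / M) := by
  refine ⟨⟨fun _ _ => 1 / M, ⟨fun _ _ => by positivity, fun _ => ?_⟩, fun _ _ => rfl, by simp⟩, ?_⟩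
  · simp [NeZero.ne M]
  · rintro _ ⟨A, hA, hA', rfl⟩
    exact hA'.reward_le hA

/-- When there are at least as many agents as tasks, each task can be given a dedicated agent. -/
theorem isGreatest_reward {N M : ℕ} [NeZero N] [NeZero M] (hNM : M ≤ N) :
    IsGreatest {r : ℝ | ∃ A : Fin N → Fin M → ℝ,
      Admissible A ∧ (⨅ j, ⨆ i, A i j) = r} 1 := by
  constructor
  · let A : Fin N → Fin M → ℝ := fun i => Pi.single (Fin.ofNat M i) 1
    have hA : Admissible A :=
      ⟨fun i j => (Pi.single_nonneg.2 zero_le_one : 0 ≤ A i) j, fun i => by simp [A]⟩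
    refine ⟨A, hA, hA.reward_le_one.antisymm (le_ciInf fun j => ?_)⟩
    refine le_trans ?_ (le_ciSup (Set.finite_range _).bddAbove (Fin.castLE hNM j))
    simp [A]
  · rintro _ ⟨A, hA, rfl⟩
    exact hA.reward_le_one

/-- `U = min`, `T = max`, continuous allocations: for
`N ≥ M ≥ 2`, the best homogeneous reward is `1/M`, the best overall reward is `1`,
and the heterogeneity gain is `ΔR = (M − 1)/M`. -/
theorem stmt10 {N M : ℕ} (hM : 2 ≤ M) (hNM : M ≤ N) :
    IsGreatest {r : ℝ | ∃ A : Fin N → Fin M → ℝ,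
        Admissible A ∧ Homogeneous A ∧ (⨅ j, ⨆ i, A i j) = r} (1 / M) ∧
    IsGreatest {r : ℝ | ∃ A : Fin N → Fin M → ℝ,
        Admissible A ∧ (⨅ j, ⨆ i, A i j) = r} 1 ∧
    sSup {r : ℝ | ∃ A : Fin N → Fin M → ℝ,
        Admissible A ∧ (⨅ j, ⨆ i, A i j) = r} -
      sSup {r : ℝ | ∃ A : Fin N → Fin M → ℝ,
        Admissible A ∧ Homogeneous A ∧ (⨅ j, ⨆ i, A i j) = r} = ((M : ℝ) - 1) / M := by
  have : NeZero M := ⟨by omega⟩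
  have : NeZero N := ⟨by omega⟩
  refine ⟨isGreatest_homogeneous_reward, isGreatest_reward hNM, ?_⟩
  rw [(isGreatest_reward hNM).csSup_eq, isGreatest_homogeneous_reward.csSup_eq, sub_div,
    div_self (NeZero.ne (M : ℝ))]
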